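/- For every θ = (θ₁, θ₂) in the high-frequency set T^H, the quantity g_m(θ) = χ(θ)·(4 + 2 cos θ₁ + 2 cos θ₂ + cos θ₁ cos θ₂)/9 lies in the closed interval [8/9, 16/9]. -/

import Mathlib

open Real Set

/-- The high-frequency set `T^H`. -/
def TH : Set (ℝ × ℝ) :=
  (Ioc (-(π/2)) (3*π/2) ×ˢ Ioc (-(π/2)) (3*π/2)) \
    (Ioc (-(π/2)) (π/2) ×ˢ Ioc (-(π/2)) (π/2))

/-- Scaled symbol of the five-point discrete Laplacian. -/
noncomputable def chi (θ : ℝ × ℝ) : ℝ := 4 - 2 * Real.cos θ.1 - 2 * Real.cos θ.2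

/-- Scaled symbol of the product of the bilinear mass matrix and the discrete Laplacian. -/
noncomputable def gm (θ : ℝ × ℝ) : ℝ :=
  chi θ * (4 + 2 * Real.cos θ.1 + 2 * Real.cos θ.2 + Real.cos θ.1 * Real.cos θ.2) / 9

/-!
In the variables `x = cos θ₁`, `y = cos θ₂` the symbol `9 * gm` is a symmetric cubic polynomial, and
on `TH` one of `x`, `y` is nonpositive, say `x`. The polynomial is concave in each variable
separately, so on `[-1, 0] × [-1, 1]` it is smallest at a corner, namely at `(-1, -1)`, where it
equals `8`. The upper bound `16` follows from writing the deficit in terms of `(x + y) ^ 2` and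
`(x - y) ^ 2`.
-/

section Polynomial

variable {R : Type*} [CommRing R]

/-- The symbol `9 * gm` as a polynomial in `x = cos θ₁` and `y = cos θ₂`. -/
def gmPoly (x y : R) : R := (4 - 2 * x - 2 * y) * (4 + 2 * x + 2 * y + x * y)

theorem gmPoly_comm (x y : R) : gmPoly x y = gmPoly y x := by
  unfold gmPoly
  ring

-- The first two summands come from concavity in `x` and in `y` and vanish at the corners of
-- `[-1, 0] × [-1, 1]`; the last is the bilinear interpolation of the corner values.
theorem gmPoly_sub_eight (x y : R) :
    gmPoly x y - 8 = 2 * ((x + 1) * -x * (2 + y)) + 2 * ((y + 1) * (1 - y) * (2 + x)) +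
      2 * ((x + 1) * (1 - y) + (y + 1)) := by
  unfold gmPoly
  ring

theorem two_mul_sixteen_sub_gmPoly (x y : R) :
    2 * (16 - gmPoly x y) = (x + y) ^ 2 * (6 + (x + y)) + (x - y) ^ 2 * (2 - (x + y)) := by
  unfold gmPoly
  ring

variable [LinearOrder R] [IsStrictOrderedRing R] {x y : R}

theorem eight_le_gmPoly (hx : x ∈ Icc (-1) 0) (hy : y ∈ Icc (-1) 1) : 8 ≤ gmPoly x y := by
  have hx_add : 0 ≤ x + 1 := by linarith [hx.1]
  have hx_neg : 0 ≤ -x := neg_nonneg.2 hx.2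
  have hx_two : 0 ≤ 2 + x := by linarith
  have hy_add : 0 ≤ y + 1 := by linarith [hy.1]
  have hy_sub : 0 ≤ 1 - y := sub_nonneg.2 hy.2
  have hy_two : 0 ≤ 2 + y := by linarith
  rw [← sub_nonneg, gmPoly_sub_eight]
  positivity

theorem gmPoly_le_sixteen (hlower : -6 ≤ x + y) (hupper : x + y ≤ 2) : gmPoly x y ≤ 16 := by
  have hsix : 0 ≤ 6 + (x + y) := by linarith
  have hdeficit : 0 ≤ 2 * (16 - gmPoly x y) := by
    rw [two_mul_sixteen_sub_gmPoly]
    positivity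
  linarith

end Polynomial

theorem gm_eq_gmPoly_cos (θ : ℝ × ℝ) : gm θ = gmPoly (cos θ.1) (cos θ.2) / 9 := rfl

theorem gm_swap (θ : ℝ × ℝ) : gm θ.swap = gm θ := by
  simp only [gm_eq_gmPoly_cos, Prod.fst_swap, Prod.snd_swap, gmPoly_comm]

theorem gm_le (θ : ℝ × ℝ) : gm θ ≤ 16 / 9 := by
  rw [gm_eq_gmPoly_cos]
  gcongr
  apply gmPoly_le_sixteen
  · linarith [neg_one_le_cos θ.1, neg_one_le_cos θ.2]
  · linarith [cos_le_one θ.1, cos_le_one θ.2]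

theorem le_gm_of_cos_fst_nonpos {θ : ℝ × ℝ} (hθ : cos θ.1 ≤ 0) : 8 / 9 ≤ gm θ := by
  rw [gm_eq_gmPoly_cos]
  gcongr
  exact eight_le_gmPoly ⟨neg_one_le_cos _, hθ⟩ (cos_mem_Icc _)

theorem le_gm_of_cos_snd_nonpos {θ : ℝ × ℝ} (hθ : cos θ.2 ≤ 0) : 8 / 9 ≤ gm θ :=
  gm_swap θ ▸ le_gm_of_cos_fst_nonpos hθ

theorem cos_nonpos_of_mem_Ioc_sdiff_Ioc {a t : ℝ}
    (ht : t ∈ Ioc a (3 * π / 2) \ Ioc a (π / 2)) : cos t ≤ 0 := by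
  have hlower : π / 2 < t := not_le.1 fun h => ht.2 ⟨ht.1.1, h⟩
  exact cos_nonpos_of_pi_div_two_le_of_le hlower.le (by linarith [ht.1.2])

theorem cos_fst_nonpos_or_cos_snd_nonpos_of_mem_TH {θ : ℝ × ℝ} (hθ : θ ∈ TH) :
    cos θ.1 ≤ 0 ∨ cos θ.2 ≤ 0 := by
  rw [TH, prod_sdiff_prod] at hθ
  rcases hθ with ⟨-, hsnd⟩ | ⟨hfst, -⟩
  · exact .inr (cos_nonpos_of_mem_Ioc_sdiff_Ioc hsnd)
  · exact .inl (cos_nonpos_of_mem_Ioc_sdiff_Ioc hfst)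

theorem stmt_2 : ∀ θ ∈ TH, gm θ ∈ Set.Icc (8/9 : ℝ) (16/9) := by
  intro θ hθ
  refine ⟨?_, gm_le θ⟩
  exact (cos_fst_nonpos_or_cos_snd_nonpos_of_mem_TH hθ).elim
    le_gm_of_cos_fst_nonpos le_gm_of_cos_snd_nonpos
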